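/- Let K ⊆ ℝⁿ be a compact set and let σ : ℝ → ℝ be continuously differentiable and not a polynomial. Suppose f : K → ℝ^m satisfies ‖f(x) − f(y)‖_∞ ≤ L‖x − y‖_2 for all x, y ∈ K. Then for every ε > 0 there exist k ∈ ℕ, matrices A ∈ ℝ^{k×n}, C ∈ ℝ^{m×k} and a vector b ∈ ℝ^k such that the one-hidden-layer neural network φ(x) = C·σ(Ax + b) satisfies sup_{x ∈ K} ‖f(x) − φ(x)‖_∞ < ε and ‖φ(x) − φ(y)‖_∞ ≤ (L + ε(√(n + n/ε)/2 + L))·‖x − y‖_2 for all x, y ∈ K. -/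

import Mathlib

/-!
Extend `f` to a Lipschitz function on the whole space and mollify it: this gives a smooth `g`,
uniformly close to `f`, with the same Lipschitz constant. It then suffices to approximate `g` by
networks in `C¹` on a ball, since by the mean value inequality `C¹`-closeness is closeness in the
Lipschitz seminorm; any Lipschitz constant larger than that of `f` can be reached in this way.

For the `C¹` approximation, identify a function with its 1-jet (value, gradient) and let `S` be the
closed span of the jets of the ridge functions `x ↦ σ (⟪a, x⟫ + b)`. Integrating over `b` shows
that `S` contains the jets of the mollifications of `σ`, and differentiating those `k` times in a
dilation of `a` gives the jets of `⟪a, x⟫ ^ k` times the value of a `k`-th derivative. Some such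
derivative is nonzero: otherwise all mollifications of `σ` are polynomials of degree less than `k`,
and so is their pointwise limit `σ`. Hence `S` contains the jets of all polynomial ridge functions,
by the Weierstrass theorem for derivatives those of all `C¹` ridge functions, in particular of plane
waves, and by Fourier inversion those of all smooth compactly supported functions.
-/

open Set Filter Topology Metric MeasureTheory Polynomial
open ContinuousLinearMap (lsmul)
open scoped ContDiff Convolution NNReal FourierTransform

section ClosedSubmodule

variable {F : Type*} [NormedAddCommGroup F] [NormedSpace ℝ F] {S : Submodule ℝ F}

theorem integral_mem_of_isClosed [CompleteSpace F] (hS : IsClosed (S : Set F)) {α : Type*}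
    [MeasurableSpace α] {μ : Measure α} {f : α → F} (hf : ∀ a, f a ∈ S) : ∫ a, f a ∂μ ∈ S := by
  by_cases hfi : Integrable f μ
  · have hquot : S.mkQL (∫ a, f a ∂μ) = 0 := by
      rw [← S.mkQL.integral_comp_comm hfi]
      exact integral_eq_zero_of_ae (.of_forall fun a ↦ by simpa using hf a)
    simpa using hquot
  · simp [integral_undef hfi]

theorem hasDerivAt_mem_of_isClosed (hS : IsClosed (S : Set F)) {γ : ℝ → F} {γ' : F} {s : ℝ}
    (hγ : HasDerivAt γ γ' s) (hmem : ∀ r, γ r ∈ S) : γ' ∈ S :=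
  hS.mem_of_tendsto hγ.tendsto_slope <|
    .of_forall fun r ↦ S.smul_mem _ (S.sub_mem (hmem r) (hmem s))

end ClosedSubmodule

theorem hasDerivAt_continuousMap {X W : Type*} [TopologicalSpace X] [CompactSpace X]
    [NormedAddCommGroup W] [NormedSpace ℝ W] [CompleteSpace W] {γ γ' : ℝ → C(X, W)}
    (hγ' : Continuous γ') (hderiv : ∀ s x, HasDerivAt (fun r ↦ γ r x) (γ' s x) s) (s : ℝ) :
    HasDerivAt γ (γ' s) s := by
  have ftc (r : ℝ) : γ r = γ 0 + ∫ q in (0 : ℝ)..r, γ' q := by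
    ext x
    have heval := (ContinuousMap.evalCLM ℝ x : C(X, W) →L[ℝ] W).intervalIntegral_comp_comm
      (hγ'.intervalIntegrable (μ := volume) 0 r)
    simp only [ContinuousMap.evalCLM_apply] at heval
    have hcont : Continuous fun q ↦ γ' q x := (ContinuousMap.evalCLM ℝ x).continuous.comp hγ'
    rw [ContinuousMap.add_apply, ← heval, intervalIntegral.integral_eq_sub_of_hasDerivAt
      (fun q _ ↦ hderiv q x) (hcont.intervalIntegrable _ _), add_sub_cancel]
  rw [funext ftc]
  exact (intervalIntegral.integral_hasDerivAt_right (hγ'.intervalIntegrable _ _)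
    hγ'.stronglyMeasurable.stronglyMeasurableAtFilter hγ'.continuousAt).const_add _

section PolynomialFunctions

theorem exists_derivative_eq_of_mem_degreeLT {𝕜 : Type*} [Field 𝕜] [CharZero 𝕜] {k : ℕ} {p : 𝕜[X]}
    (hp : p ∈ degreeLT 𝕜 k) : ∃ q ∈ degreeLT 𝕜 (k + 1), derivative q = p := by
  refine ⟨∑ i ∈ Finset.range k, monomial (i + 1) (p.coeff i / (i + 1)),
    sum_mem fun i hi ↦ mem_degreeLT.2 ?_, ?_⟩
  · exact (degree_monomial_le _ _).trans_lt (mod_cast Nat.succ_lt_succ (Finset.mem_range.1 hi))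
  · ext i
    have hi : (i : 𝕜) + 1 ≠ 0 := Nat.cast_add_one_ne_zero i
    have hcoeff (hk : k ≤ i) : p.coeff i = 0 :=
      coeff_eq_zero_of_degree_lt ((mem_degreeLT.1 hp).trans_le (mod_cast hk))
    rw [coeff_derivative, finsetSum_coeff]
    simp only [coeff_monomial, add_left_inj, Finset.sum_ite_eq', Finset.mem_range]
    split_ifs with hik
    · exact div_mul_cancel₀ _ hi
    · rw [zero_mul, hcoeff (not_lt.1 hik)]

theorem exists_derivative_eq {𝕜 : Type*} [Field 𝕜] [CharZero 𝕜] (p : 𝕜[X]) :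
    ∃ q : 𝕜[X], derivative q = p := by
  obtain ⟨q, -, hq⟩ := exists_derivative_eq_of_mem_degreeLT (k := p.natDegree + 1) (p := p) <|
    mem_degreeLT.2 <| degree_le_natDegree.trans_lt (mod_cast p.natDegree.lt_succ_self)
  exact ⟨q, hq⟩

variable (𝕜 : Type*) [RCLike 𝕜]

/-- The space of polynomial functions `𝕜 → 𝕜` of degree less than `k`, as a subspace of all
functions with the topology of pointwise convergence. -/
noncomputable def polynomialFunctionsLT (k : ℕ) : Submodule 𝕜 (𝕜 → 𝕜) :=
  (degreeLT 𝕜 k).map (LinearMap.pi leval)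

theorem isClosed_polynomialFunctionsLT (k : ℕ) :
    IsClosed (polynomialFunctionsLT 𝕜 k : Set (𝕜 → 𝕜)) := by
  have : FiniteDimensional 𝕜 (degreeLT 𝕜 k) := .of_injective _ (degreeLTEquiv 𝕜 k).injective
  have : FiniteDimensional 𝕜 (polynomialFunctionsLT 𝕜 k) := by
    unfold polynomialFunctionsLT; infer_instance
  exact Submodule.closed_of_finiteDimensional _

variable {𝕜}

theorem mem_polynomialFunctionsLT_of_iteratedDeriv_eq_zero {k : ℕ} {f : 𝕜 → 𝕜}
    (hf : ContDiff 𝕜 k f) (hk : iteratedDeriv k f = 0) : f ∈ polynomialFunctionsLT 𝕜 k := by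
  induction k generalizing f with
  | zero => simp_all
  | succ k ih =>
    have hf' : ContDiff 𝕜 (k + 1) f := mod_cast hf
    obtain ⟨hf_diff, -, hf_deriv⟩ := contDiff_succ_iff_deriv.1 hf'
    obtain ⟨p, hp, hfp⟩ := ih hf_deriv (by rwa [iteratedDeriv_succ'] at hk)
    obtain ⟨q, hq, hqp⟩ := exists_derivative_eq_of_mem_degreeLT hp
    have hconst (t : 𝕜) : f t - q.eval t = f 0 - q.eval 0 :=
      is_const_of_deriv_eq_zero (f := fun t ↦ f t - q.eval t) (hf_diff.sub q.differentiable)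
        (fun z ↦ by
          rw [deriv_fun_sub (hf_diff z) q.differentiableAt, q.deriv, hqp, ← congrFun hfp z]
          simp) t 0
    refine ⟨q + C (f 0 - q.eval 0), add_mem hq (mem_degreeLT.2 ?_), funext fun t ↦ ?_⟩
    · exact degree_C_le.trans_lt (by exact_mod_cast k.succ_pos)
    · simp [← hconst t]

end PolynomialFunctions

section Mollification

variable {V : Type*} [NormedAddCommGroup V] [NormedSpace ℝ V] [FiniteDimensional ℝ V]
  {W : Type*} [NormedAddCommGroup W] [NormedSpace ℝ W]

section Convolution

variable [MeasurableSpace V] [BorelSpace V] {μ : Measure V} [μ.IsAddHaarMeasure]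

theorem contDiff_normed_convolution (φ : ContDiffBump (0 : V)) {f : V → W} (hf : Continuous f) :
    ContDiff ℝ ∞ (φ.normed μ ⋆[lsmul ℝ ℝ, μ] f) :=
  φ.hasCompactSupport_normed.contDiff_convolution_left _ φ.contDiff_normed hf.locallyIntegrable

theorem lipschitzWith_normed_convolution (φ : ContDiffBump (0 : V)) {f : V → W} {L : ℝ≥0}
    (hf : LipschitzWith L f) : LipschitzWith L (φ.normed μ ⋆[lsmul ℝ ℝ, μ] f) := by
  have hint (x : V) : Integrable (fun s ↦ φ.normed μ s • f (x - s)) μ :=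
    (φ.continuous_normed.smul (hf.continuous.comp (by fun_prop))).integrable_of_hasCompactSupport
      φ.hasCompactSupport_normed.smul_right
  refine LipschitzWith.of_dist_le_mul fun x y ↦ ?_
  have hsub : (φ.normed μ ⋆[lsmul ℝ ℝ, μ] f) x -
      (φ.normed μ ⋆[lsmul ℝ ℝ, μ] f) y =
      ∫ s, φ.normed μ s • (f (x - s) - f (y - s)) ∂μ := by
    simp only [convolution_lsmul, smul_sub, integral_sub (hint x) (hint y)]
  calc dist _ _ = ‖∫ s, φ.normed μ s • (f (x - s) - f (y - s)) ∂μ‖ := by rw [dist_eq_norm, hsub]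
    _ ≤ ∫ s, φ.normed μ s * (L * dist x y) ∂μ := by
      refine norm_integral_le_of_norm_le (φ.integrable_normed.mul_const _) (.of_forall fun s ↦ ?_)
      rw [norm_smul, Real.norm_of_nonneg (φ.nonneg_normed s)]
      gcongr
      · exact φ.nonneg_normed s
      · simpa [dist_eq_norm] using hf.dist_le_mul (x - s) (y - s)
    _ = L * dist x y := by rw [integral_mul_const, φ.integral_normed, one_mul]

end Convolution

theorem exists_contDiff_lipschitzWith_near [CompleteSpace W] {f : V → W} {L : ℝ≥0}
    (hf : LipschitzWith L f) {δ : ℝ} (hδ : 0 < δ) :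
    ∃ g : V → W, ContDiff ℝ ∞ g ∧ LipschitzWith L g ∧ ∀ x, dist (g x) (f x) ≤ δ := by
  borelize V
  let φ : ContDiffBump (0 : V) :=
    ⟨δ / (L + 1) / 2, δ / (L + 1), by positivity, half_lt_self (by positivity)⟩
  refine ⟨φ.normed Measure.addHaar ⋆[lsmul ℝ ℝ, Measure.addHaar] f,
    contDiff_normed_convolution φ hf.continuous,
    lipschitzWith_normed_convolution φ hf, fun x ↦ ?_⟩
  refine φ.dist_normed_convolution_le hf.continuous.aestronglyMeasurable fun z hz ↦ ?_
  calc dist (f z) (f x) ≤ L * dist z x := hf.dist_le_mul z x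
    _ ≤ (L + 1) * (δ / (L + 1)) := by
      gcongr
      · exact le_add_of_nonneg_right zero_le_one
      · exact (mem_ball.1 hz).le
    _ = δ := by field_simp

theorem hasDerivAt_convolution_lsmul {ψ : ℝ → ℝ} (hψ : Continuous ψ) (hψc : HasCompactSupport ψ)
    {f : ℝ → W} (hf : ContDiff ℝ 1 f) (t : ℝ) :
    HasDerivAt (ψ ⋆[lsmul ℝ ℝ, volume] f) ((ψ ⋆[lsmul ℝ ℝ, volume] deriv f) t) t := by
  have : Continuous f := hf.continuous
  have : Continuous (deriv f) := hf.continuous_deriv le_rfl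
  obtain ⟨M, hM⟩ := (((isCompact_closedBall t 1).prod hψc.isCompact).image
    (f := fun q : ℝ × ℝ ↦ deriv f (q.1 - q.2)) (by fun_prop)).isBounded.exists_norm_le
  refine (hasDerivAt_integral_of_dominated_loc_of_deriv_le (F := fun t s ↦ ψ s • f (t - s))
    (F' := fun t s ↦ ψ s • deriv f (t - s)) (bound := fun s ↦ ‖ψ s‖ * M)
    (closedBall_mem_nhds t one_pos) (.of_forall fun x ↦ ?_) ?_ ?_ (.of_forall fun s x hx ↦ ?_)
    ?_ (.of_forall fun s x _ ↦ ?_)).2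
  · exact (by fun_prop : Continuous _).aestronglyMeasurable
  · exact (by fun_prop : Continuous _).integrable_of_hasCompactSupport hψc.smul_right
  · exact (by fun_prop : Continuous _).aestronglyMeasurable
  · rw [norm_smul]
    by_cases hs : s ∈ tsupport ψ
    · gcongr
      exact hM _ ⟨(x, s), ⟨hx, hs⟩, rfl⟩
    · simp [image_eq_zero_of_notMem_tsupport hs]
  · exact (hψ.integrable_of_hasCompactSupport hψc).norm.mul_const M
  · have hd : HasDerivAt f (deriv f (x - s)) (x - s) :=
      (hf.differentiable one_ne_zero _).hasDerivAt
    exact (hd.comp_sub_const x s).const_smul _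

theorem exists_iteratedDeriv_normed_convolution_ne_zero {σ : ℝ → ℝ} (hσ : Continuous σ)
    (hpoly : ¬ ∃ p : ℝ[X], ∀ t, σ t = p.eval t) (k : ℕ) : ∃ (φ : ContDiffBump (0 : ℝ)) (b : ℝ),
      iteratedDeriv k (φ.normed volume ⋆[lsmul ℝ ℝ, volume] σ) b ≠ 0 := by
  by_contra! hzero
  let φ (i : ℕ) : ContDiffBump (0 : ℝ) :=
    ⟨1 / ((i : ℝ) + 1) / 2, 1 / ((i : ℝ) + 1), by positivity, half_lt_self (by positivity)⟩
  have hlim : Tendsto (fun i ↦ (φ i).normed volume ⋆[lsmul ℝ ℝ, volume] σ)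
      atTop (𝓝 σ) := tendsto_pi_nhds.2 <| ContDiffBump.convolution_tendsto_right_of_continuous
        tendsto_one_div_add_atTop_nhds_zero_nat hσ
  have hmem (i : ℕ) : (φ i).normed volume ⋆[lsmul ℝ ℝ, volume] σ ∈
      polynomialFunctionsLT ℝ k := mem_polynomialFunctionsLT_of_iteratedDeriv_eq_zero
    ((contDiff_normed_convolution _ hσ).of_le (mod_cast le_top)) (funext (hzero (φ i)))
  obtain ⟨p, -, hp⟩ :=
    (isClosed_polynomialFunctionsLT ℝ k).mem_of_tendsto hlim (.of_forall hmem)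
  exact hpoly ⟨p, fun t ↦ (congrFun hp t).symm⟩

end Mollification

section Weierstrass

theorem exists_polynomial_near_contDiff {u : ℝ → ℝ} (hu : ContDiff ℝ 1 u) (a b : ℝ) {ε : ℝ}
    (hε : 0 < ε) : ∃ q : ℝ[X], ∀ t ∈ Icc a b,
      |u t - q.eval t| ≤ ε ∧ |deriv u t - q.derivative.eval t| ≤ ε := by
  have hpos : 0 < 1 + |b - a| := by positivity
  have hδ : 0 < ε / (1 + |b - a|) := by positivity
  obtain ⟨p, hp⟩ := exists_polynomial_near_of_continuousOn a b (deriv u)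
    (hu.continuous_deriv le_rfl).continuousOn _ hδ
  obtain ⟨q₀, rfl⟩ := exists_derivative_eq p
  have hderiv (t : ℝ) (ht : t ∈ Icc a b) :
      |deriv u t - q₀.derivative.eval t| ≤ ε / (1 + |b - a|) := by
    rw [abs_sub_comm]
    exact (hp t ht).le
  refine ⟨q₀ + C (u a - q₀.eval a), fun t ht ↦ ⟨?_, ?_⟩⟩
  · have hmvt := (convex_Icc a b).norm_image_sub_le_of_norm_hasDerivWithin_le
      (f := fun t ↦ u t - q₀.eval t)
      (fun z _ ↦ ((hu.differentiable one_ne_zero z).hasDerivAt.sub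
        (q₀.hasDerivAt z)).hasDerivWithinAt) hderiv (left_mem_Icc.2 (ht.1.trans ht.2)) ht
    calc |u t - (q₀ + C (u a - q₀.eval a)).eval t|
        = ‖u t - q₀.eval t - (u a - q₀.eval a)‖ := by
          rw [eval_add, eval_C, ← sub_sub, Real.norm_eq_abs]
      _ ≤ ε / (1 + |b - a|) * ‖t - a‖ := hmvt
      _ ≤ ε / (1 + |b - a|) * (1 + |b - a|) := by
          gcongr
          rw [Real.norm_of_nonneg (sub_nonneg.2 ht.1)]
          linarith [ht.2, le_abs_self (b - a)]
      _ = ε := div_mul_cancel₀ _ hpos.ne'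
  · rw [derivative_add, derivative_C, add_zero]
    exact (hderiv t ht).trans (div_le_self hε.le (by linarith [abs_nonneg (b - a)]))

end Weierstrass

section RidgeJet

variable {E : Type*} [NormedAddCommGroup E] [InnerProductSpace ℝ E] (K : Set E) {u v : ℝ → ℝ}

/-- The `1`-jet (value, gradient) on `K` of the ridge function `x ↦ u (⟪a, x⟫ + b)`. -/
noncomputable def ridgeJet (hu : ContDiff ℝ 1 u) (a : E) (b : ℝ) : C(K, ℝ × E) where
  toFun x := (u (inner ℝ a x + b), deriv u (inner ℝ a x + b) • a)
  continuous_toFun := by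
    have := hu.continuous
    have := hu.continuous_deriv le_rfl
    fun_prop

variable {K} {a : E} {b : ℝ}

@[simp]
theorem ridgeJet_apply (hu : ContDiff ℝ 1 u) (a : E) (b : ℝ) (x : K) :
    ridgeJet K hu a b x = (u (inner ℝ a x + b), deriv u (inner ℝ a x + b) • a) :=
  rfl

theorem ridgeJet_add (hu : ContDiff ℝ 1 u) (hv : ContDiff ℝ 1 v) :
    ridgeJet K (hu.add hv) a b = ridgeJet K hu a b + ridgeJet K hv a b := by
  ext x : 1
  simp [deriv_fun_add (hu.differentiable one_ne_zero _) (hv.differentiable one_ne_zero _), add_smul]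

theorem ridgeJet_sub (hu : ContDiff ℝ 1 u) (hv : ContDiff ℝ 1 v) :
    ridgeJet K (hu.sub hv) a b = ridgeJet K hu a b - ridgeJet K hv a b := by
  ext x : 1
  simp [deriv_fun_sub (hu.differentiable one_ne_zero _) (hv.differentiable one_ne_zero _), sub_smul]

theorem ridgeJet_const_smul (c : ℝ) (hu : ContDiff ℝ 1 u) :
    ridgeJet K (hu.const_smul c) a b = c • ridgeJet K hu a b := by
  ext x : 1
  simp [mul_smul]

theorem norm_ridgeJet_le [CompactSpace K] {δ : ℝ} (hδ : 0 ≤ δ) (hu : ContDiff ℝ 1 u)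
    (hval : ∀ x ∈ K, |u (inner ℝ a x + b)| ≤ δ)
    (hderiv : ∀ x ∈ K, |deriv u (inner ℝ a x + b)| ≤ δ) :
    ‖ridgeJet K hu a b‖ ≤ δ * (1 + ‖a‖) := by
  refine (ContinuousMap.norm_le _ (by positivity)).2 fun x ↦ max_le ?_ ?_
  · exact (hval x x.2).trans (le_mul_of_one_le_right hδ (le_add_of_nonneg_right (norm_nonneg a)))
  · rw [ridgeJet_apply, norm_smul]
    exact mul_le_mul (hderiv x x.2) (le_add_of_nonneg_left zero_le_one) (norm_nonneg a) hδ

variable [CompactSpace K] {S : Submodule ℝ C(K, ℝ × E)}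

theorem ridgeJet_convolution_mem [CompleteSpace E] (hS : IsClosed (S : Set C(K, ℝ × E)))
    (hu : ContDiff ℝ 1 u) (hmem : ∀ b, ridgeJet K hu a b ∈ S) {ψ : ℝ → ℝ} (hψ : Continuous ψ)
    (hψc : HasCompactSupport ψ) (hτ : ContDiff ℝ 1 (ψ ⋆[lsmul ℝ ℝ, volume] u)) :
    ridgeJet K hτ a b ∈ S := by
  have hcont : Continuous fun s ↦ ψ s • ridgeJet K hu a (b - s) := by
    have := hu.continuous
    have := hu.continuous_deriv le_rfl
    refine ContinuousMap.continuous_of_continuous_uncurry _ ?_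
    simp only [Function.uncurry_def, ContinuousMap.smul_apply, ridgeJet_apply]
    fun_prop
  have hint : Integrable fun s ↦ ψ s • ridgeJet K hu a (b - s) :=
    hcont.integrable_of_hasCompactSupport hψc.smul_right
  have hjet : ridgeJet K hτ a b = ∫ s, ψ s • ridgeJet K hu a (b - s) := by
    ext x : 1
    have hintx : Integrable fun s ↦ (ψ s • ridgeJet K hu a (b - s)) x :=
      (ContinuousMap.evalCLM ℝ x).integrable_comp hint
    rw [ContinuousMap.integral_apply hint, ridgeJet_apply,
      (hasDerivAt_convolution_lsmul hψ hψc hu _).deriv]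
    refine Prod.ext ?_ ?_
    · rw [fst_integral hintx]
      simp [convolution_lsmul, add_sub_assoc]
    · rw [snd_integral hintx]
      simp [convolution_lsmul, add_sub_assoc, smul_smul, integral_smul_const]
  exact hjet ▸ integral_mem_of_isClosed hS fun s ↦ S.smul_mem _ (hmem _)

end RidgeJet

section Dilation

/-- The `j`-th derivative in `s` of `τ (s * t + b)`, as a function of `t`. -/
noncomputable def dilationDeriv (τ : ℝ → ℝ) (b : ℝ) (j : ℕ) (s t : ℝ) : ℝ :=
  t ^ j * iteratedDeriv j τ (s * t + b)

variable {τ : ℝ → ℝ}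

theorem contDiff_iteratedDeriv (hτ : ContDiff ℝ ∞ τ) (j : ℕ) :
    ContDiff ℝ ∞ (iteratedDeriv j τ) := by
  rw [iteratedDeriv_eq_iterate]
  exact ContDiff.iterate_deriv j hτ

theorem hasDerivAt_iteratedDeriv (hτ : ContDiff ℝ ∞ τ) (j : ℕ) (t : ℝ) :
    HasDerivAt (iteratedDeriv j τ) (iteratedDeriv (j + 1) τ t) t := by
  rw [iteratedDeriv_succ]
  exact ((contDiff_iteratedDeriv hτ j).differentiable (by simp) t).hasDerivAt

theorem contDiff_dilationDeriv (hτ : ContDiff ℝ ∞ τ) (b : ℝ) (j : ℕ) (s : ℝ) :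
    ContDiff ℝ 1 (dilationDeriv τ b j s) := by
  have := (contDiff_iteratedDeriv hτ j).of_le (m := 1) (mod_cast le_top)
  unfold dilationDeriv
  fun_prop

theorem deriv_dilationDeriv (hτ : ContDiff ℝ ∞ τ) (b : ℝ) (j : ℕ) (s t : ℝ) :
    deriv (dilationDeriv τ b j s) t = j * t ^ (j - 1) * iteratedDeriv j τ (s * t + b) +
      t ^ j * (s * iteratedDeriv (j + 1) τ (s * t + b)) := by
  have haff : HasDerivAt (fun r ↦ s * r + b) s t := by
    simpa using ((hasDerivAt_id t).const_mul s).add_const b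
  have hcomp : HasDerivAt (fun r ↦ iteratedDeriv j τ (s * r + b))
      (iteratedDeriv (j + 1) τ (s * t + b) * s) t :=
    (hasDerivAt_iteratedDeriv hτ j _).comp t haff
  exact (((hasDerivAt_pow j t).fun_mul hcomp).congr_deriv (by ring)).deriv

theorem hasDerivAt_iteratedDeriv_mul_add (hτ : ContDiff ℝ ∞ τ) (b : ℝ) (j : ℕ)
    (s t : ℝ) : HasDerivAt (fun r ↦ iteratedDeriv j τ (r * t + b))
      (iteratedDeriv (j + 1) τ (s * t + b) * t) s :=
  (hasDerivAt_iteratedDeriv hτ j _).comp s <| by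
    simpa using ((hasDerivAt_id s).mul_const t).add_const b

theorem hasDerivAt_dilationDeriv (hτ : ContDiff ℝ ∞ τ) (b : ℝ) (j : ℕ) (s t : ℝ) :
    HasDerivAt (fun r ↦ dilationDeriv τ b j r t) (dilationDeriv τ b (j + 1) s t) s :=
  ((hasDerivAt_iteratedDeriv_mul_add hτ b j s t).const_mul (t ^ j)).congr_deriv <| by
    rw [dilationDeriv]; ring

theorem hasDerivAt_deriv_dilationDeriv (hτ : ContDiff ℝ ∞ τ) (b : ℝ) (j : ℕ) (s t : ℝ) :
    HasDerivAt (fun r ↦ deriv (dilationDeriv τ b j r) t)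
      (deriv (dilationDeriv τ b (j + 1) s) t) s := by
  simp only [deriv_dilationDeriv hτ]
  refine (((hasDerivAt_iteratedDeriv_mul_add hτ b j s t).const_mul (j * t ^ (j - 1))).fun_add
    (((hasDerivAt_id' s).fun_mul (hasDerivAt_iteratedDeriv_mul_add hτ b (j + 1) s t)).const_mul
      (t ^ j))).congr_deriv ?_
  cases j <;> simp <;> ring

end Dilation

section RidgeClosure

variable {E : Type*} [NormedAddCommGroup E] [InnerProductSpace ℝ E] {K : Set E} {a : E}

theorem continuous_ridgeJet_dilationDeriv {τ : ℝ → ℝ} (hτ : ContDiff ℝ ∞ τ) (b : ℝ) (j : ℕ) :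
    Continuous fun s ↦ ridgeJet K (contDiff_dilationDeriv hτ b j s) a 0 := by
  have (i : ℕ) : Continuous (iteratedDeriv i τ) := (contDiff_iteratedDeriv hτ i).continuous
  refine ContinuousMap.continuous_of_continuous_uncurry _ ?_
  simp only [Function.uncurry_def, ridgeJet_apply, deriv_dilationDeriv hτ]
  unfold dilationDeriv
  fun_prop

theorem ridgeJet_eval_mem {S : Submodule ℝ C(K, ℝ × E)}
    (hmem : ∀ k, ridgeJet K (contDiff_id.pow k) a 0 ∈ S) (p : ℝ[X]) :
    ridgeJet K (p.contDiff_aeval 1) a 0 ∈ S := by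
  induction p using Polynomial.induction_on' with
  | add p q hp hq =>
    simp only [map_add]
    rw [ridgeJet_add (p.contDiff_aeval 1) (q.contDiff_aeval 1)]
    exact S.add_mem hp hq
  | monomial k c =>
    simp only [aeval_monomial]
    have hsmul := S.smul_mem c (hmem k)
    rwa [← ridgeJet_const_smul] at hsmul

variable [CompactSpace K] {S : Submodule ℝ C(K, ℝ × E)}

theorem ridgeJet_dilationDeriv_mem [CompleteSpace E] (hS : IsClosed (S : Set C(K, ℝ × E)))
    {τ : ℝ → ℝ} (hτ : ContDiff ℝ ∞ τ) (hτ₁ : ContDiff ℝ 1 τ)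
    (hmem : ∀ a b, ridgeJet K hτ₁ a b ∈ S) (b : ℝ) (j : ℕ) (s : ℝ) :
    ridgeJet K (contDiff_dilationDeriv hτ b j s) a 0 ∈ S := by
  induction j generalizing s with
  | zero =>
    convert hmem (s • a) b using 1
    ext x : 1
    simp [deriv_dilationDeriv hτ, dilationDeriv, smul_smul, mul_comm, inner_smul_left]
  | succ j ih =>
    have hderiv := hasDerivAt_continuousMap
      (γ := fun s ↦ ridgeJet K (contDiff_dilationDeriv hτ b j s) a 0)
      (continuous_ridgeJet_dilationDeriv hτ b (j + 1)) fun s x ↦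
        (hasDerivAt_dilationDeriv hτ b j s _).prodMk
          ((hasDerivAt_deriv_dilationDeriv hτ b j s _).smul_const a)
    exact hasDerivAt_mem_of_isClosed hS (hderiv s) ih

theorem ridgeJet_pow_mem [CompleteSpace E] (hS : IsClosed (S : Set C(K, ℝ × E)))
    {τ : ℝ → ℝ} (hτ : ContDiff ℝ ∞ τ) (hτ₁ : ContDiff ℝ 1 τ)
    (hmem : ∀ a b, ridgeJet K hτ₁ a b ∈ S) {b : ℝ} {k : ℕ} (hb : iteratedDeriv k τ b ≠ 0) :
    ridgeJet K (contDiff_id.pow k) a 0 ∈ S := by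
  have hjet := ridgeJet_dilationDeriv_mem (a := a) hS hτ hτ₁ hmem b k 0
  have hpow : dilationDeriv τ b k 0 = fun t ↦ iteratedDeriv k τ b • t ^ k := by
    ext t
    simp [dilationDeriv, mul_comm]
  simp only [hpow] at hjet
  rwa [ridgeJet_const_smul _ (contDiff_id.pow k), S.smul_mem_iff hb] at hjet

theorem ridgeJet_mem_of_forall_eval_mem (hS : IsClosed (S : Set C(K, ℝ × E)))
    (hmem : ∀ p : ℝ[X], ridgeJet K (p.contDiff_aeval 1) a 0 ∈ S) {u : ℝ → ℝ}
    (hu : ContDiff ℝ 1 u) : ridgeJet K hu a 0 ∈ S := by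
  rw [← SetLike.mem_coe, ← hS.closure_eq, Metric.mem_closure_iff]
  intro ε hε
  obtain ⟨r, hr⟩ := (isCompact_iff_compactSpace.2 ‹_› : IsCompact K).exists_bound_of_continuousOn
    (f := fun x ↦ inner ℝ a x) (by fun_prop)
  have hpos : 0 < 1 + ‖a‖ := by positivity
  obtain ⟨q, hq⟩ := exists_polynomial_near_contDiff hu (-r) r (half_pos (div_pos hε hpos))
  have hq' (x : E) (hx : x ∈ K) := hq (inner ℝ a x) (abs_le.1 (hr x hx))
  refine ⟨_, hmem q, ?_⟩
  calc dist _ _ ≤ ε / (1 + ‖a‖) / 2 * (1 + ‖a‖) := by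
        rw [dist_eq_norm, ← ridgeJet_sub]
        refine norm_ridgeJet_le (by positivity) _ ?_ ?_
        · simpa using fun x hx ↦ (hq' x hx).1
        · intro x hx
          rw [deriv_fun_sub (hu.differentiable one_ne_zero _) q.differentiableAt_aeval]
          simpa using (hq' x hx).2
    _ = ε / 2 := by field_simp
    _ < ε := half_lt_self hε

theorem ridgeJet_mem_of_not_polynomial [CompleteSpace E] (hS : IsClosed (S : Set C(K, ℝ × E)))
    {σ : ℝ → ℝ} (hσ : ContDiff ℝ 1 σ) (hpoly : ¬ ∃ p : ℝ[X], ∀ t, σ t = p.eval t)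
    (hmem : ∀ a b, ridgeJet K hσ a b ∈ S) {u : ℝ → ℝ} (hu : ContDiff ℝ 1 u) :
    ridgeJet K hu a 0 ∈ S := by
  refine ridgeJet_mem_of_forall_eval_mem hS (ridgeJet_eval_mem fun k ↦ ?_) hu
  obtain ⟨φ, b, hb⟩ := exists_iteratedDeriv_normed_convolution_ne_zero hσ.continuous hpoly k
  have hτ := contDiff_normed_convolution (μ := volume) φ hσ.continuous
  exact ridgeJet_pow_mem hS hτ (hτ.of_le (mod_cast le_top)) (fun a b ↦
    ridgeJet_convolution_mem hS hσ (hmem a) φ.continuous_normed φ.hasCompactSupport_normed _) hb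

end RidgeClosure

section Fourier

/-- The real part of the wave `t ↦ exp (2πit) * c` with complex amplitude `c`. -/
noncomputable def realWave (c : ℂ) (t : ℝ) : ℝ :=
  (Real.fourierChar t • c).re

theorem abs_realWave_le (c : ℂ) (t : ℝ) : |realWave c t| ≤ ‖c‖ :=
  (Complex.abs_re_le_norm _).trans_eq (Circle.norm_smul _ _)

theorem hasDerivAt_realWave (c : ℂ) (t : ℝ) :
    HasDerivAt (realWave c) (realWave (2 * Real.pi * Complex.I * c) t) t := by
  have hwave := Complex.reCLM.hasFDerivAt.comp_hasDerivAt t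
    ((Real.hasDerivAt_fourierChar t).mul_const c)
  refine hwave.congr_deriv ?_
  rw [realWave, Circle.smul_def, Complex.reCLM_apply, smul_eq_mul]
  ring_nf

theorem deriv_realWave (c : ℂ) : deriv (realWave c) = realWave (2 * Real.pi * Complex.I * c) :=
  funext fun t ↦ (hasDerivAt_realWave c t).deriv

theorem continuous_uncurry_realWave : Continuous fun p : ℂ × ℝ ↦ realWave p.1 p.2 := by
  unfold realWave
  fun_prop

theorem contDiff_realWave (c : ℂ) : ContDiff ℝ 1 (realWave c) := by
  refine contDiff_one_iff_deriv.2 ⟨fun t ↦ (hasDerivAt_realWave c t).differentiableAt, ?_⟩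
  rw [deriv_realWave]
  exact continuous_uncurry_realWave.comp (by fun_prop : Continuous fun t ↦ (_, t))

theorem abs_deriv_realWave_le (c : ℂ) (t : ℝ) : |deriv (realWave c) t| ≤ 2 * Real.pi * ‖c‖ := by
  rw [deriv_realWave]
  refine (abs_realWave_le _ _).trans_eq ?_
  simp [abs_of_pos Real.pi_pos]

variable {E : Type*} [NormedAddCommGroup E] [InnerProductSpace ℝ E] [FiniteDimensional ℝ E]

section Integral

variable [MeasurableSpace E] [BorelSpace E]

theorem exists_schwartzMap_eq_integral_realWave {g : E → ℝ} (hg : ContDiff ℝ ∞ g)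
    (hgc : HasCompactSupport g) :
    ∃ h : SchwartzMap E ℂ, ∀ x, g x = ∫ ξ, realWave (h ξ) (inner ℝ ξ x) := by
  have hgc' : HasCompactSupport fun x ↦ (g x : ℂ) :=
    hgc.comp_left (g := Complex.ofReal) Complex.ofReal_zero
  have hg' : ContDiff ℝ ∞ fun x ↦ (g x : ℂ) := Complex.ofRealCLM.contDiff.comp hg
  let f : SchwartzMap E ℂ := hgc'.toSchwartzMap hg'
  refine ⟨𝓕 f, fun x ↦ ?_⟩
  have hint : Integrable fun ξ ↦ Real.fourierChar (inner ℝ ξ x) • 𝓕 f ξ :=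
    (𝓕 f).integrable.mono (by fun_prop : Continuous _).aestronglyMeasurable
      (.of_forall fun ξ ↦ (Circle.norm_smul _ _).le)
  calc g x = (f x).re := rfl
    _ = (𝓕⁻ (𝓕 f) x).re := by rw [FourierTransform.fourierInv_fourier_eq]
    _ = (∫ ξ, Real.fourierChar (inner ℝ ξ x) • 𝓕 f ξ).re := by
      rw [SchwartzMap.fourierInv_coe, Real.fourierInv_eq]
    _ = ∫ ξ, realWave (𝓕 f ξ) (inner ℝ ξ x) := (Complex.reCLM.integral_comp_comm hint).symm

theorem integrable_ridgeJet_realWave (K : Set E) [CompactSpace K] (h : SchwartzMap E ℂ) :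
    Integrable fun ξ ↦ ridgeJet K (contDiff_realWave (h ξ)) ξ 0 := by
  have hcont : Continuous fun ξ ↦ ridgeJet K (contDiff_realWave (h ξ)) ξ 0 := by
    refine ContinuousMap.continuous_of_continuous_uncurry _ ?_
    simp only [Function.uncurry_def, ridgeJet_apply, deriv_realWave]
    unfold realWave
    fun_prop
  have hbound := (h.integrable (μ := volume)).norm.add (h.integrable_pow_mul volume 1)
  refine (hbound.const_mul (1 + 2 * Real.pi)).mono' hcont.aestronglyMeasurable
    (.of_forall fun ξ ↦ ?_)
  calc ‖ridgeJet K (contDiff_realWave (h ξ)) ξ 0‖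
      ≤ (1 + 2 * Real.pi) * ‖h ξ‖ * (1 + ‖ξ‖) := by
        refine norm_ridgeJet_le (by positivity) _ (fun x _ ↦ ?_) fun x _ ↦ ?_
        · exact (abs_realWave_le _ _).trans
            (le_mul_of_one_le_left (norm_nonneg _) (le_add_of_nonneg_right Real.two_pi_pos.le))
        · refine (abs_deriv_realWave_le _ _).trans ?_
          gcongr
          exact le_add_of_nonneg_left zero_le_one
    _ = (1 + 2 * Real.pi) * (‖h ξ‖ + ‖ξ‖ ^ 1 * ‖h ξ‖) := by ring

end Integral

theorem exists_mem_fst_eq_of_contDiff {K : Set E} [CompactSpace K] {S : Submodule ℝ C(K, ℝ × E)}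
    (hS : IsClosed (S : Set C(K, ℝ × E)))
    (hmem : ∀ (u : ℝ → ℝ) (hu : ContDiff ℝ 1 u) (a : E), ridgeJet K hu a 0 ∈ S)
    {g : E → ℝ} (hg : ContDiff ℝ ∞ g) (hgc : HasCompactSupport g) :
    ∃ F ∈ S, ∀ x : K, (F x).1 = g x := by
  borelize E
  have : CompleteSpace E := FiniteDimensional.complete ℝ E
  obtain ⟨h, hgh⟩ := exists_schwartzMap_eq_integral_realWave hg hgc
  have hint := integrable_ridgeJet_realWave K h
  refine ⟨_, integral_mem_of_isClosed (μ := volume) hS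
    fun ξ ↦ hmem _ (contDiff_realWave (h ξ)) ξ, fun x ↦ ?_⟩
  have hintx : Integrable fun ξ ↦ ridgeJet K (contDiff_realWave (h ξ)) ξ 0 x :=
    (ContinuousMap.evalCLM ℝ x).integrable_comp hint
  rw [ContinuousMap.integral_apply hint, fst_integral hintx, hgh]
  simp

theorem exists_contDiff_hasCompactSupport_eqOn {K : Set E} (hK : Bornology.IsBounded K)
    {g : E → ℝ} (hg : ContDiff ℝ ∞ g) :
    ∃ g' : E → ℝ, ContDiff ℝ ∞ g' ∧ HasCompactSupport g' ∧ EqOn g' g K := by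
  obtain ⟨R, hR⟩ := hK.subset_closedBall 0
  let χ : ContDiffBump (0 : E) := ⟨max R 1, max R 1 + 1, by positivity, lt_add_one _⟩
  refine ⟨fun x ↦ χ x * g x, χ.contDiff.mul hg, χ.hasCompactSupport.mul_right, fun x hx ↦ ?_⟩
  have hx' : x ∈ closedBall (0 : E) χ.rIn := closedBall_subset_closedBall (le_max_left _ _) (hR hx)
  simp only [χ.one_of_mem_closedBall hx', one_mul]

end Fourier

section ShallowNet

variable {E : Type*} [NormedAddCommGroup E] [InnerProductSpace ℝ E] {σ : ℝ → ℝ}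

/-- The scalar one-hidden-layer network whose hidden units are the pairs `(a, b)` in the support
of `c`, with output weight `c (a, b)`. -/
noncomputable def shallowNet (σ : ℝ → ℝ) (c : E × ℝ →₀ ℝ) (x : E) : ℝ :=
  c.sum fun q w ↦ w * σ (inner ℝ q.1 x + q.2)

theorem hasFDerivAt_ridge (hσ : ContDiff ℝ 1 σ) (a : E) (b : ℝ) (x : E) :
    HasFDerivAt (fun x ↦ σ (inner ℝ a x + b)) (innerSL ℝ (deriv σ (inner ℝ a x + b) • a)) x := by
  have haff : HasFDerivAt (fun x ↦ inner ℝ a x + b) (innerSL ℝ a) x :=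
    (innerSL ℝ a).hasFDerivAt.add_const b
  rw [map_smul]
  exact (hσ.differentiable one_ne_zero _).hasDerivAt.comp_hasFDerivAt x haff

variable {K : Set E}

theorem exists_shallowNet_of_mem_span_ridgeJet (hσ : ContDiff ℝ 1 σ) {F : C(K, ℝ × E)}
    (hF : F ∈ Submodule.span ℝ (range fun q : E × ℝ ↦ ridgeJet K hσ q.1 q.2)) :
    ∃ c : E × ℝ →₀ ℝ, ∀ x : K, shallowNet σ c x = (F x).1 ∧
      HasFDerivAt (shallowNet σ c) (innerSL ℝ (F x).2) x := by
  obtain ⟨c, rfl⟩ := Finsupp.mem_span_range_iff_exists_finsupp.1 hF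
  refine ⟨c, fun x ↦ ⟨?_, ?_⟩⟩
  · simp [shallowNet, Finsupp.sum, Prod.fst_sum]
  · have hsum := HasFDerivAt.fun_sum (u := c.support)
      fun q _ ↦ (hasFDerivAt_ridge hσ q.1 q.2 x).const_mul (c q)
    refine hsum.congr_fderiv ?_
    simp [Finsupp.sum, Prod.snd_sum]

variable [CompactSpace K]

theorem abs_fst_sub_le_of_mem_span_ridgeJet (hK : Convex ℝ K) (hσ : ContDiff ℝ 1 σ)
    {F : C(K, ℝ × E)}
    (hF : F ∈ Submodule.span ℝ (range fun q : E × ℝ ↦ ridgeJet K hσ q.1 q.2)) (x y : K) :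
    |(F x).1 - (F y).1| ≤ ‖F‖ * ‖(x : E) - y‖ := by
  obtain ⟨c, hc⟩ := exists_shallowNet_of_mem_span_ridgeJet hσ hF
  rw [← (hc x).1, ← (hc y).1]
  refine hK.norm_image_sub_le_of_norm_fderiv_le (𝕜 := ℝ)
    (fun z hz ↦ (hc ⟨z, hz⟩).2.differentiableAt) (fun z hz ↦ ?_) y.2 x.2
  rw [(hc ⟨z, hz⟩).2.fderiv, innerSL_apply_norm]
  exact (norm_snd_le _).trans (F.norm_coe_le_norm ⟨z, hz⟩)

theorem abs_fst_sub_le_of_mem_closure_span_ridgeJet (hK : Convex ℝ K) (hσ : ContDiff ℝ 1 σ)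
    {F : C(K, ℝ × E)}
    (hF : F ∈ (Submodule.span ℝ (range fun q : E × ℝ ↦ ridgeJet K hσ q.1 q.2)).topologicalClosure)
    (x y : K) : |(F x).1 - (F y).1| ≤ ‖F‖ * ‖(x : E) - y‖ := by
  have (z : K) : Continuous fun G : C(K, ℝ × E) ↦ G z := continuous_eval_const z
  have hclosed : IsClosed {G : C(K, ℝ × E) | |(G x).1 - (G y).1| ≤ ‖G‖ * ‖(x : E) - y‖} :=
    isClosed_le (by fun_prop) (by fun_prop)
  exact closure_minimal (fun G hG ↦ abs_fst_sub_le_of_mem_span_ridgeJet hK hσ hG x y) hclosed hF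

end ShallowNet

section Approximation

variable {E : Type*} [NormedAddCommGroup E] [InnerProductSpace ℝ E] [FiniteDimensional ℝ E]
  {K : Set E} {σ : ℝ → ℝ}

theorem exists_shallowNet_near_contDiff (hK : IsCompact K) (hconv : Convex ℝ K)
    (hσ : ContDiff ℝ 1 σ) (hpoly : ¬ ∃ p : ℝ[X], ∀ t, σ t = p.eval t) {g : E → ℝ}
    (hg : ContDiff ℝ ∞ g) {η : ℝ≥0} (hη : 0 < η) :
    ∃ c : E × ℝ →₀ ℝ, (∀ x ∈ K, |g x - shallowNet σ c x| ≤ η) ∧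
      LipschitzOnWith η (fun x ↦ g x - shallowNet σ c x) K := by
  have : CompactSpace K := isCompact_iff_compactSpace.1 hK
  have : CompleteSpace E := FiniteDimensional.complete ℝ E
  obtain ⟨g', hg', hg'c, hgg'⟩ := exists_contDiff_hasCompactSupport_eqOn hK.isBounded hg
  let T := Submodule.span ℝ (range fun q : E × ℝ ↦ ridgeJet K hσ q.1 q.2)
  have hT (a : E) (b : ℝ) : ridgeJet K hσ a b ∈ T.topologicalClosure :=
    T.le_topologicalClosure (Submodule.subset_span ⟨(a, b), rfl⟩)
  obtain ⟨F, hF, hFg⟩ := exists_mem_fst_eq_of_contDiff T.isClosed_topologicalClosure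
    (fun u hu a ↦ ridgeJet_mem_of_not_polynomial T.isClosed_topologicalClosure hσ hpoly hT hu)
    hg' hg'c
  obtain ⟨P, hP, hFP⟩ := Metric.mem_closure_iff.1 hF η (by exact_mod_cast hη)
  rw [dist_eq_norm] at hFP
  obtain ⟨c, hc⟩ := exists_shallowNet_of_mem_span_ridgeJet hσ hP
  have hdiff (x : E) (hx : x ∈ K) : g x - shallowNet σ c x = ((F - P) ⟨x, hx⟩).1 := by
    rw [(hc ⟨x, hx⟩).1, ← hgg' hx, ← hFg ⟨x, hx⟩, ContinuousMap.sub_apply, Prod.fst_sub]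
  refine ⟨c, fun x hx ↦ ?_, LipschitzOnWith.of_dist_le_mul fun x hx y hy ↦ ?_⟩
  · rw [hdiff x hx]
    exact ((norm_fst_le _).trans ((F - P).norm_coe_le_norm _)).trans hFP.le
  · rw [hdiff x hx, hdiff y hy, Real.dist_eq, dist_eq_norm]
    refine (abs_fst_sub_le_of_mem_closure_span_ridgeJet hconv hσ
      (sub_mem hF (T.le_topologicalClosure hP)) ⟨x, hx⟩ ⟨y, hy⟩).trans ?_
    gcongr

theorem exists_shallowNet_near_lipschitzOnWith (hK : Bornology.IsBounded K)
    (hσ : ContDiff ℝ 1 σ) (hpoly : ¬ ∃ p : ℝ[X], ∀ t, σ t = p.eval t) {f : E → ℝ} {L L' : ℝ≥0}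
    (hf : LipschitzOnWith L f K) (hL : L < L') {ε : ℝ} (hε : 0 < ε) :
    ∃ c : E × ℝ →₀ ℝ, (∀ x ∈ K, |f x - shallowNet σ c x| < ε) ∧
      LipschitzOnWith L' (shallowNet σ c) K := by
  obtain ⟨R, hR⟩ := hK.subset_closedBall 0
  obtain ⟨f', hf', hff'⟩ := hf.extend_real
  obtain ⟨g, hg, hgL, hgf'⟩ := exists_contDiff_lipschitzWith_near hf' (half_pos hε)
  lift ε to ℝ≥0 using hε.le
  have hη : 0 < min (L' - L) (ε / 3) :=
    lt_min (tsub_pos_of_lt hL) (div_pos (by exact_mod_cast hε) three_pos)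
  obtain ⟨c, hval, hlip⟩ := exists_shallowNet_near_contDiff (isCompact_closedBall (0 : E) R)
    (convex_closedBall _ _) hσ hpoly hg hη
  refine ⟨c, fun x hx ↦ ?_, ?_⟩
  · have hfg : |f x - g x| ≤ ε / 2 := by
      rw [hff' hx, abs_sub_comm]
      exact hgf' x
    have hgc : |g x - shallowNet σ c x| ≤ ε / 3 :=
      (hval x (hR hx)).trans (by exact_mod_cast min_le_right _ _)
    linarith [abs_sub_le (f x) (g x) (shallowNet σ c x)]
  · have hsub := ((hgL.lipschitzOnWith (s := K)).sub (hlip.mono hR)).weaken <|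
      (add_le_add_right (min_le_left _ _) L).trans (add_tsub_cancel_of_le hL.le).le
    simpa only [sub_sub_cancel] using hsub

end Approximation

section Matrix

variable {n m : ℕ} {K : Set (EuclideanSpace ℝ (Fin n))} {σ : ℝ → ℝ}
  {f : EuclideanSpace ℝ (Fin n) → Fin m → ℝ}

theorem exists_mulVec_eq_shallowNet (σ : ℝ → ℝ)
    (c : Fin m → EuclideanSpace ℝ (Fin n) × ℝ →₀ ℝ) :
    ∃ (k : ℕ) (A : Matrix (Fin k) (Fin n) ℝ) (b : Fin k → ℝ) (C : Matrix (Fin m) (Fin k) ℝ),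
      ∀ x : EuclideanSpace ℝ (Fin n),
        C.mulVec (fun i ↦ σ ((A.mulVec x + b) i)) = fun i ↦ shallowNet σ (c i) x := by
  classical
  obtain ⟨T, hT⟩ : ∃ T, ∀ i, (c i).support ⊆ T :=
    ⟨_, fun i ↦ Finset.subset_biUnion_of_mem (fun i ↦ (c i).support) (Finset.mem_univ i)⟩
  refine ⟨T.card, .of fun j l ↦ (T.equivFin.symm j).1.1 l, fun j ↦ (T.equivFin.symm j).1.2,
    .of fun i j ↦ c i (T.equivFin.symm j).1, fun x ↦ funext fun i ↦ ?_⟩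
  rw [shallowNet, Finsupp.sum_of_support_subset _ (hT i) _ (by simp), ← Finset.sum_coe_sort T,
    ← T.equivFin.symm.sum_comp]
  simp only [Matrix.mulVec, dotProduct, Matrix.of_apply, Pi.add_apply]
  refine Finset.sum_congr rfl fun j _ ↦ ?_
  congr 3
  simp [PiLp.inner_apply, mul_comm]

theorem exists_mulVec_near_lipschitzOnWith (hK : Bornology.IsBounded K) (hσ : ContDiff ℝ 1 σ)
    (hpoly : ¬ ∃ p : ℝ[X], ∀ t, σ t = p.eval t) {L L' : ℝ≥0} (hf : LipschitzOnWith L f K)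
    (hL : L < L') {ε : ℝ} (hε : 0 < ε) :
    ∃ (k : ℕ) (A : Matrix (Fin k) (Fin n) ℝ) (b : Fin k → ℝ) (C : Matrix (Fin m) (Fin k) ℝ),
      (∀ x ∈ K, ‖f x - C.mulVec (fun i ↦ σ ((A.mulVec x + b) i))‖ < ε) ∧
      LipschitzOnWith L'
        (fun x : EuclideanSpace ℝ (Fin n) ↦ C.mulVec (fun i ↦ σ ((A.mulVec x + b) i))) K := by
  have hfi (i : Fin m) : LipschitzOnWith L (fun x ↦ f x i) K := .of_dist_le_mul fun x hx y hy ↦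
    (dist_le_pi_dist (f x) (f y) i).trans (hf.dist_le_mul x hx y hy)
  choose c hval hlip using fun i ↦
    exists_shallowNet_near_lipschitzOnWith hK hσ hpoly (hfi i) hL hε
  obtain ⟨k, A, b, C, hnet⟩ := exists_mulVec_eq_shallowNet σ c
  refine ⟨k, A, b, C, fun x hx ↦ ?_, .of_dist_le_mul fun x hx y hy ↦ ?_⟩
  · rw [hnet, pi_norm_lt_iff hε]
    exact fun i ↦ hval i x hx
  · rw [hnet, hnet, dist_pi_le_iff (by positivity)]
    exact fun i ↦ (hlip i).dist_le_mul x hx y hy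

theorem nonneg_of_norm_sub_le {V W : Type*} [NormedAddCommGroup V] [SeminormedAddCommGroup W]
    {K : Set V} (hK : K.Nontrivial) {f : V → W} {L : ℝ}
    (hf : ∀ x ∈ K, ∀ y ∈ K, ‖f x - f y‖ ≤ L * ‖x - y‖) : 0 ≤ L := by
  obtain ⟨x, hx, y, hy, hxy⟩ := hK
  exact nonneg_of_mul_nonneg_left ((norm_nonneg _).trans (hf x hx y hy))
    (norm_pos_iff.2 (sub_ne_zero.2 hxy))

theorem lt_add_mul_sqrt_add {L ε : ℝ} (hK : K.Nontrivial)
    (hf : ∀ x ∈ K, ∀ y ∈ K, ‖f x - f y‖ ≤ L * ‖x - y‖) (hε : 0 < ε) :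
    L < L + ε * (Real.sqrt (n + n / ε) / 2 + L) := by
  have hn : 0 < n := by
    obtain ⟨x, -, y, -, hxy⟩ := hK
    rcases n.eq_zero_or_pos with rfl | hn
    · exact absurd (Subsingleton.elim x y) hxy
    · exact hn
  have hL := nonneg_of_norm_sub_le hK hf
  have : 0 < ε * (Real.sqrt (n + n / ε) / 2 + L) := by positivity
  linarith

theorem stmt_1_general (hK : Bornology.IsBounded K) (hσ : ContDiff ℝ 1 σ)
    (hpoly : ¬ ∃ p : ℝ[X], ∀ t, σ t = p.eval t) {L L' : ℝ}
    (hf : ∀ x ∈ K, ∀ y ∈ K, ‖f x - f y‖ ≤ L * ‖x - y‖) (hL : K.Nontrivial → L < L')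
    {ε : ℝ} (hε : 0 < ε) :
    ∃ (k : ℕ) (A : Matrix (Fin k) (Fin n) ℝ) (b : Fin k → ℝ) (C : Matrix (Fin m) (Fin k) ℝ),
      (∀ x ∈ K, ‖f x - C.mulVec (fun i ↦ σ ((A.mulVec x + b) i))‖ < ε) ∧
      (∀ x ∈ K, ∀ y ∈ K,
        ‖C.mulVec (fun i ↦ σ ((A.mulVec x + b) i)) - C.mulVec (fun i ↦ σ ((A.mulVec y + b) i))‖
          ≤ L' * ‖x - y‖) := by
  rcases K.subsingleton_or_nontrivial with hsub | hnontriv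
  · obtain ⟨k, A, b, C, hval, -⟩ := exists_mulVec_near_lipschitzOnWith (L := 0) hK hσ hpoly
      (.of_dist_le_mul fun x hx y hy ↦ by simp [hsub hx hy]) one_pos hε
    exact ⟨k, A, b, C, hval, fun x hx y hy ↦ by simp [hsub hx hy]⟩
  · lift L to ℝ≥0 using nonneg_of_norm_sub_le hnontriv hf
    lift L' to ℝ≥0 using L.2.trans (hL hnontriv).le
    obtain ⟨k, A, b, C, hval, hlip⟩ := exists_mulVec_near_lipschitzOnWith hK hσ hpoly
      (lipschitzOnWith_iff_norm_sub_le.2 fun _ hx _ hy ↦ hf _ hx _ hy) (hL hnontriv) hε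
    exact ⟨k, A, b, C, hval, fun x hx y hy ↦ lipschitzOnWith_iff_norm_sub_le.1 hlip hx hy⟩

end Matrix

/-- Universal approximation of a function that is `L`-Lipschitz from the Euclidean
norm to the sup norm on a compact set by a one-hidden-layer neural network `φ(x) = C·σ(Ax + b)`
with Lipschitz constant `L + ε(√(n + n/ε)/2 + L)` in the same norms.  The domain
`EuclideanSpace ℝ (Fin n)` carries the Euclidean norm and the codomain `Fin m → ℝ` the sup norm. -/
theorem stmt_1 (n m : ℕ) (K : Set (EuclideanSpace ℝ (Fin n))) (hK : IsCompact K)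
    (σ : ℝ → ℝ) (hσ : ContDiff ℝ 1 σ)
    (hσpoly : ¬ ∃ p : Polynomial ℝ, ∀ t : ℝ, σ t = p.eval t)
    (f : EuclideanSpace ℝ (Fin n) → (Fin m → ℝ)) (L : ℝ)
    (hf : ∀ x ∈ K, ∀ y ∈ K, ‖f x - f y‖ ≤ L * ‖x - y‖)
    (ε : ℝ) (hε : 0 < ε) :
    ∃ (k : ℕ) (A : Matrix (Fin k) (Fin n) ℝ) (b : Fin k → ℝ) (C : Matrix (Fin m) (Fin k) ℝ),
      (∀ x ∈ K, ‖f x - C.mulVec (fun i => σ ((A.mulVec x + b) i))‖ < ε) ∧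
      (∀ x ∈ K, ∀ y ∈ K,
        ‖C.mulVec (fun i => σ ((A.mulVec x + b) i)) -
            C.mulVec (fun i => σ ((A.mulVec y + b) i))‖
          ≤ (L + ε * (Real.sqrt ((n : ℝ) + (n : ℝ) / ε) / 2 + L)) * ‖x - y‖) :=
  stmt_1_general hK.isBounded hσ hσpoly hf (fun hK' ↦ lt_add_mul_sqrt_add hK' hf hε) hε
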